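/- arXiv:1411.6354 — 2 statements merged into one kernel-verified Lean document; each statement's English description precedes it below -/
import Mathlib

section
/- Let w be a weight structure on a triangulated category C, let m ≤ l be integers, let X, X' be objects of C, and fix distinguished triangles w_{≤m}X → X → w_{≥m+1}X → (w_{≤m}X)[1] and w_{≤l}X' → X' → w_{≥l+1}X' → (w_{≤l}X')[1] with w_{≤m}X ∈ C_{w≤m}, w_{≥m+1}X ∈ C_{w≥m+1}, w_{≤l}X' ∈ C_{w≤l}, w_{≥l+1}X' ∈ C_{w≥l+1}. Then any morphism g : X → X' extends to a morphism of these triangles, i.e., there exist morphisms a : w_{≤m}X → w_{≤l}X' and b : w_{≥m+1}X → w_{≥l+1}X' making the two evident squares commute. Moreover, if m < l then the pair (a, b) is unique. -/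
/-! The existence of `a` and `b` follows from the vanishing of every morphism
`w_{≤m}X ⟶ w_{≥l+1}X'` (`WeightStructure.hom_eq_zero`): it kills the composite
`w_{≤m}X ⟶ X ⟶ X' ⟶ w_{≥l+1}X'`, so the long exact `Hom` sequences of the two triangles
yield a lift `a` of `w_{≤m}X ⟶ X'` and an extension `b` of `X ⟶ w_{≥l+1}X'`.

For uniqueness, the difference of two choices of `a` factors through some
`w_{≤m}X ⟶ (w_{≥l+1}X')[-1]`, and the difference of two choices of `b` through some
`(w_{≤m}X)[1] ⟶ w_{≥l+1}X'`. Since `(w_{≥l+1}X')[-1]` has weights `≥ l` and `(w_{≤m}X)[1]`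
has weights `≤ m + 1`, both vanish by the same orthogonality when `m < l`.
-/

open CategoryTheory CategoryTheory.Limits CategoryTheory.Pretriangulated

namespace CWH

/-- `X` is a retract of `Y`. -/
def IsRetract {C : Type*} [Category C] (X Y : C) : Prop :=
  ∃ (i : X ⟶ Y) (r : Y ⟶ X), i ≫ r = 𝟙 X

/-- The Karoubi-closure of a class of objects: all retracts of its objects. -/
def retractClosure {C : Type*} [Category C] (S : Set C) : Set C :=
  {X : C | ∃ Y ∈ S, IsRetract X Y}

variable (C : Type*) [Category C] [HasZeroObject C] [HasShift C ℤ]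
  [Preadditive C] [∀ n : ℤ, (shiftFunctor C n).Additive] [Pretriangulated C]

/-- A weight structure on a (pre)triangulated category (homological convention):
a pair of retract-closed classes `LE = C_{w≤0}` and `GE = C_{w≥0}` such that
`C_{w≤0} ⊆ C_{w≤0}[1]`, `C_{w≥0}[1] ⊆ C_{w≥0}`, `Hom(C_{w≤0}, C_{w≥0}[1]) = 0`,
and every object admits a weight decomposition. -/
structure WeightStructure where
  LE : Set C
  GE : Set C
  retract_LE : ∀ ⦃X Y : C⦄, IsRetract X Y → Y ∈ LE → X ∈ LE
  retract_GE : ∀ ⦃X Y : C⦄, IsRetract X Y → Y ∈ GE → X ∈ GE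
  shift_LE : ∀ ⦃X : C⦄, X ∈ LE → X⟦(-1 : ℤ)⟧ ∈ LE
  shift_GE : ∀ ⦃X : C⦄, X ∈ GE → X⟦(1 : ℤ)⟧ ∈ GE
  orthogonal : ∀ ⦃X Y : C⦄, X ∈ LE → Y ∈ GE → ∀ f : X ⟶ Y⟦(1 : ℤ)⟧, f = 0
  decomp : ∀ M : C, ∃ (X Y : C) (f : X ⟶ M) (g : M ⟶ Y) (h : Y ⟶ X⟦(1 : ℤ)⟧),
    Triangle.mk f g h ∈ (distTriang C) ∧ X ∈ LE ∧ Y⟦(-1 : ℤ)⟧ ∈ GE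

variable {C}

namespace WeightStructure

variable (w : WeightStructure C)

/-- `C_{w≤i} = C_{w≤0}[i]`. -/
def le (i : ℤ) : Set C := {X : C | X⟦(-i)⟧ ∈ w.LE}

/-- `C_{w≥i} = C_{w≥0}[i]`. -/
def ge (i : ℤ) : Set C := {X : C | X⟦(-i)⟧ ∈ w.GE}

/-- `C_{w=i} = C_{w≤i} ∩ C_{w≥i}`. -/
def eqw (i : ℤ) : Set C := w.le i ∩ w.ge i

/-- `w` is bounded if every object lies in some `C_{w≤i}` and in some `C_{w≥i}`. -/
def IsBounded : Prop := ∀ X : C, (∃ i : ℤ, X ∈ w.le i) ∧ (∃ i : ℤ, X ∈ w.ge i)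

end WeightStructure

/-- The extension-closure of a class `S` of objects: the smallest class containing
the zero objects and `S` and closed under extensions (distinguished triangles). -/
inductive ExtClosure (S : Set C) : C → Prop
  | zero (X : C) : IsZero X → ExtClosure S X
  | of (X : C) : X ∈ S → ExtClosure S X
  | ext {A E B : C} (f : A ⟶ E) (g : E ⟶ B) (h : B ⟶ A⟦(1 : ℤ)⟧) :
      Triangle.mk f g h ∈ (distTriang C) → ExtClosure S A → ExtClosure S B → ExtClosure S E

/-- The smallest full Karoubi-closed (strict) triangulated subcategory containing `S`:
closure under zero objects, shifts, cones and retracts. -/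
inductive TriangClosure (S : Set C) : C → Prop
  | of (X : C) : X ∈ S → TriangClosure S X
  | zero (X : C) : IsZero X → TriangClosure S X
  | shift (X : C) (n : ℤ) : TriangClosure S X → TriangClosure S (X⟦n⟧)
  | ext {X Y Z : C} (f : X ⟶ Y) (g : Y ⟶ Z) (h : Z ⟶ X⟦(1 : ℤ)⟧) :
      Triangle.mk f g h ∈ (distTriang C) → TriangClosure S X → TriangClosure S Y →
      TriangClosure S Z
  | retract (X Y : C) : IsRetract X Y → TriangClosure S Y → TriangClosure S X

/-- A (strict) full triangulated subcategory, given by its class of objects: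
it contains the zero objects and is closed under shifts and under the
two-out-of-three property for distinguished triangles. -/
structure IsTriangulatedSub (P : Set C) : Prop where
  zero : ∀ X : C, IsZero X → X ∈ P
  shift : ∀ X ∈ P, ∀ n : ℤ, X⟦n⟧ ∈ P
  ext₂ : ∀ ⦃X Y Z : C⦄ (f : X ⟶ Y) (g : Y ⟶ Z) (h : Z ⟶ X⟦(1 : ℤ)⟧),
    Triangle.mk f g h ∈ (distTriang C) → X ∈ P → Z ∈ P → Y ∈ P
  ext₃ : ∀ ⦃X Y Z : C⦄ (f : X ⟶ Y) (g : Y ⟶ Z) (h : Z ⟶ X⟦(1 : ℤ)⟧),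
    Triangle.mk f g h ∈ (distTriang C) → X ∈ P → Y ∈ P → Z ∈ P
  ext₁ : ∀ ⦃X Y Z : C⦄ (f : X ⟶ Y) (g : Y ⟶ Z) (h : Z ⟶ X⟦(1 : ℤ)⟧),
    Triangle.mk f g h ∈ (distTriang C) → Y ∈ P → Z ∈ P → X ∈ P

/-- A weight structure on the full (triangulated) subcategory of `C` whose objects
are given by the class `P`; retracts are taken inside `P` and the distinguished
triangles of the subcategory are the distinguished triangles of `C` with vertices
in `P`. -/
structure IsWeightStructureOn (P LEs GEs : Set C) : Prop where
  le_sub : LEs ⊆ P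
  ge_sub : GEs ⊆ P
  retract_le : ∀ ⦃X Y : C⦄, X ∈ P → IsRetract X Y → Y ∈ LEs → X ∈ LEs
  retract_ge : ∀ ⦃X Y : C⦄, X ∈ P → IsRetract X Y → Y ∈ GEs → X ∈ GEs
  shift_le : ∀ ⦃X : C⦄, X ∈ LEs → X⟦(-1 : ℤ)⟧ ∈ LEs
  shift_ge : ∀ ⦃X : C⦄, X ∈ GEs → X⟦(1 : ℤ)⟧ ∈ GEs
  orthogonal : ∀ ⦃X Y : C⦄, X ∈ LEs → Y ∈ GEs → ∀ f : X ⟶ Y⟦(1 : ℤ)⟧, f = 0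
  decomp : ∀ M ∈ P, ∃ (X Y : C) (f : X ⟶ M) (g : M ⟶ Y) (h : Y ⟶ X⟦(1 : ℤ)⟧),
    Triangle.mk f g h ∈ (distTriang C) ∧ X ∈ LEs ∧ Y⟦(-1 : ℤ)⟧ ∈ GEs

/-- The class of morphisms of `C` whose cone lies in `P`; the Verdier quotient
`C/P` is the localization of `C` at this class. -/
def coneIn (P : Set C) : MorphismProperty C := fun X Y f =>
  ∃ (Z : C) (g : Y ⟶ Z) (h : Z ⟶ X⟦(1 : ℤ)⟧),
    Triangle.mk f g h ∈ (distTriang C) ∧ Z ∈ P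

/-- A weight Postnikov tower for `M`: choices of weight truncations `trunc l = w_{≤l}M`
(with cones `conePt l = w_{≥l+1}M`), of the connecting morphisms between them that are
compatible with `𝟙 M`, and of the distinguished triangles
`w_{≤l}M → w_{≤l+1}M → M^{-l-1}[l+1] → (w_{≤l}M)[1]`; the objects `termAt l = M^{-l}`
lie in the heart and are the terms of the associated weight complex `t(M)`, whose
boundary morphisms `bd (l+1) l : M^{-l-1} → M^{-l}` are obtained by composing the
connecting morphisms of two consecutive triangles. -/
structure WeightPostnikovTower (w : WeightStructure C) (M : C) where
  trunc : ℤ → C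
  trunc_mem : ∀ l : ℤ, trunc l ∈ w.le l
  ι : ∀ l : ℤ, trunc l ⟶ M
  conePt : ℤ → C
  cone_mem : ∀ l : ℤ, conePt l ∈ w.ge (l + 1)
  coneπ : ∀ l : ℤ, M ⟶ conePt l
  coneδ : ∀ l : ℤ, conePt l ⟶ (trunc l)⟦(1 : ℤ)⟧
  trunc_dist : ∀ l : ℤ, Triangle.mk (ι l) (coneπ l) (coneδ l) ∈ (distTriang C)
  step : ∀ l : ℤ, trunc l ⟶ trunc (l + 1)
  step_ι : ∀ l : ℤ, step l ≫ ι (l + 1) = ι l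
  termAt : ℤ → C
  term_mem : ∀ l : ℤ, termAt l ∈ w.LE ∧ termAt l ∈ w.GE
  sπ : ∀ l : ℤ, trunc l ⟶ (termAt l)⟦l⟧
  sδ : ∀ l : ℤ, (termAt (l + 1))⟦(l + 1 : ℤ)⟧ ⟶ (trunc l)⟦(1 : ℤ)⟧
  step_dist : ∀ l : ℤ, Triangle.mk (step l) (sπ (l + 1)) (sδ l) ∈ (distTriang C)
  bd : ∀ i j : ℤ, termAt i ⟶ termAt j
  bd_shape : ∀ i j : ℤ, j + 1 ≠ i → bd i j = 0
  bd_eq : ∀ l : ℤ,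
    (shiftFunctor C (l + 1)).map (bd (l + 1) l) ≫
      (shiftFunctorAdd' C l 1 (l + 1) rfl).hom.app (termAt l) =
    sδ l ≫ (shiftFunctor C (1 : ℤ)).map (sπ l)

/-- The differential of the weight complex associated to a weight Postnikov tower,
in "homological" indexing: the `l`-th term `termAt l` is the `(-l)`-th term `M^{-l}`
of the weight complex. -/
def towerD {w : WeightStructure C} {M : C} (T : WeightPostnikovTower w M) :
    ∀ l : ℤ, T.termAt (l + 1) ⟶ T.termAt l :=
  fun l => T.bd (l + 1) l

section Complexes

variable {X Y : ℤ → C}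

/-- A morphism of ("homologically indexed") complexes. -/
def IsChainMapDown (X Y : ℤ → C) (dX : ∀ l : ℤ, X (l + 1) ⟶ X l)
    (dY : ∀ l : ℤ, Y (l + 1) ⟶ Y l) (f : ∀ l : ℤ, X l ⟶ Y l) : Prop :=
  ∀ l : ℤ, f (l + 1) ≫ dY l = dX l ≫ f l

/-- Two families of morphisms of complexes are chain homotopic. -/
def ChainHomotopicDown (X Y : ℤ → C) (dX : ∀ l : ℤ, X (l + 1) ⟶ X l)
    (dY : ∀ l : ℤ, Y (l + 1) ⟶ Y l) (f g : ∀ l : ℤ, X l ⟶ Y l) : Prop :=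
  ∃ s : ∀ l : ℤ, X l ⟶ Y (l + 1),
    ∀ l : ℤ, f (l + 1) - g (l + 1) = s (l + 1) ≫ dY (l + 1) + dX l ≫ s l

/-- Two complexes are homotopy equivalent (i.e., isomorphic in the homotopy category). -/
def HomotopyEquivDown (X Y : ℤ → C) (dX : ∀ l : ℤ, X (l + 1) ⟶ X l)
    (dY : ∀ l : ℤ, Y (l + 1) ⟶ Y l) : Prop :=
  ∃ (f : ∀ l : ℤ, X l ⟶ Y l) (g : ∀ l : ℤ, Y l ⟶ X l),
    IsChainMapDown X Y dX dY f ∧ IsChainMapDown Y X dY dX g ∧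
    ChainHomotopicDown X X dX dX (fun l => f l ≫ g l) (fun l => 𝟙 (X l)) ∧
    ChainHomotopicDown Y Y dY dY (fun l => g l ≫ f l) (fun l => 𝟙 (Y l))

end Complexes


namespace WeightStructure

variable (w : WeightStructure C)

lemma LE_of_iso {X Y : C} (e : X ≅ Y) (hX : X ∈ w.LE) : Y ∈ w.LE :=
  w.retract_LE ⟨e.inv, e.hom, e.inv_hom_id⟩ hX

lemma GE_of_iso {X Y : C} (e : X ≅ Y) (hX : X ∈ w.GE) : Y ∈ w.GE :=
  w.retract_GE ⟨e.inv, e.hom, e.inv_hom_id⟩ hX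

lemma le_shift {X : C} {i : ℤ} (hX : X ∈ w.le i) (n j : ℤ) (h : i + n = j) :
    X⟦n⟧ ∈ w.le j :=
  w.LE_of_iso ((shiftFunctorAdd' C n (-j) (-i) (by omega)).app X) hX

lemma ge_shift {X : C} {i : ℤ} (hX : X ∈ w.ge i) (n j : ℤ) (h : i + n = j) :
    X⟦n⟧ ∈ w.ge j :=
  w.GE_of_iso ((shiftFunctorAdd' C n (-j) (-i) (by omega)).app X) hX

lemma ge_of_le {X : C} {i j : ℤ} (hij : i ≤ j) (hX : X ∈ w.ge j) : X ∈ w.ge i := by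
  induction i, hij using Int.leInductionDown with
  | base => exact hX
  | pred k _ ih =>
    exact w.GE_of_iso ((shiftFunctorAdd' C (-k) 1 (-(k - 1)) (by omega)).symm.app X)
      (w.shift_GE ih)

/-- Orthogonality in all weights: the case `j = i + 1` is the axiom shifted by `-i`,
and the general case follows since `C_{w≥j} ⊆ C_{w≥i+1}`. -/
lemma hom_eq_zero {X Y : C} {i j : ℤ} (hij : i < j) (hX : X ∈ w.le i) (hY : Y ∈ w.ge j)
    (f : X ⟶ Y) : f = 0 := by
  have hY' : Y ∈ w.ge (i + 1) := w.ge_of_le (by omega) hY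
  let e := (shiftFunctorAdd' C (-(i + 1)) 1 (-i) (by omega)).app Y
  have h : f⟦-i⟧' ≫ e.hom = 0 := w.orthogonal hX hY' _
  have h' : f⟦-i⟧' = 0 := by
    rw [← cancel_mono e.hom, h, zero_comp]
  exact (shiftFunctor C (-i)).map_injective (by rw [h', Functor.map_zero])

end WeightStructure

/-- a morphism `g : X ⟶ X'` extends to a morphism of (shifted) weight
decomposition triangles `w_{≤m}X → X → w_{≥m+1}X` and `w_{≤l}X' → X' → w_{≥l+1}X'`
(for `m ≤ l`); if `m < l` this extension is unique. -/
theorem statement5 (w : WeightStructure C) (m l : ℤ) (hml : m ≤ l)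
    (X X' Xm Ym Xl Yl : C)
    (am : Xm ⟶ X) (bm : X ⟶ Ym) (cm : Ym ⟶ Xm⟦(1 : ℤ)⟧)
    (hTm : Triangle.mk am bm cm ∈ (distTriang C))
    (hXm : Xm ∈ w.le m) (hYm : Ym ∈ w.ge (m + 1))
    (al : Xl ⟶ X') (bl : X' ⟶ Yl) (cl : Yl ⟶ Xl⟦(1 : ℤ)⟧)
    (hTl : Triangle.mk al bl cl ∈ (distTriang C))
    (hXl : Xl ∈ w.le l) (hYl : Yl ∈ w.ge (l + 1))
    (g : X ⟶ X') :
    (∃ (a : Xm ⟶ Xl) (b : Ym ⟶ Yl), a ≫ al = am ≫ g ∧ bm ≫ b = g ≫ bl) ∧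
    (m < l → ∀ (a a' : Xm ⟶ Xl) (b b' : Ym ⟶ Yl),
      a ≫ al = am ≫ g → bm ≫ b = g ≫ bl →
      a' ≫ al = am ≫ g → bm ≫ b' = g ≫ bl → a = a' ∧ b = b') := by
  have h₀ : am ≫ g ≫ bl = 0 := w.hom_eq_zero (by omega) hXm hYl _
  refine ⟨?_, ?_⟩
  · obtain ⟨a, ha⟩ := Triangle.coyoneda_exact₂ _ hTl (am ≫ g)
      ((Category.assoc am g bl).trans h₀)
    obtain ⟨b, hb⟩ := Triangle.yoneda_exact₂ _ hTm (g ≫ bl) h₀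
    exact ⟨a, b, ha.symm, hb.symm⟩
  · intro hlt a a' b b' ha hb ha' hb'
    constructor
    · obtain ⟨k, hk⟩ := Triangle.coyoneda_exact₂ _ (inv_rot_of_distTriang _ hTl) (a - a')
        (show (a - a') ≫ al = 0 by rw [Preadditive.sub_comp, ha, ha', sub_self])
      have hk₀ : k = 0 := w.hom_eq_zero hlt hXm (w.ge_shift hYl (-1) l (by omega)) k
      rw [hk₀, zero_comp] at hk
      exact sub_eq_zero.mp hk
    · obtain ⟨k, hk⟩ := Triangle.yoneda_exact₃ _ hTm (b - b')
        (show bm ≫ (b - b') = 0 by rw [Preadditive.comp_sub, hb, hb', sub_self])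
      have hk₀ : k = 0 :=
        w.hom_eq_zero (show m + 1 < l + 1 by omega) (w.le_shift hXm 1 _ rfl) hYl k
      rw [hk₀, comp_zero] at hk
      exact sub_eq_zero.mp hk

end CWH
end

section
/- Let w be a weight structure on a triangulated category C and let D be a full triangulated subcategory of C such that w restricts to D (i.e., the pair (Obj D ∩ C_{w≤0}, Obj D ∩ C_{w≥0}) is a weight structure on D). Let l : C → C/D denote the Verdier quotient functor. Then w induces a weight structure on C/D: the Karoubi-closure in C/D of l(C_{w≤0}) and the Karoubi-closure in C/D of l(C_{w≥0}) form a weight structure on C/D. -/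
/-!
The retract and shift axioms for the induced pair are formal, and a weight decomposition in the
quotient is the image under `L` of one in `C`, since `L` is essentially surjective. The content is
the orthogonality axiom, `map_hom_eq_zero`.

A morphism `L X ⟶ L N`, with `X` in `C_{w≤0}` and `N` in `C_{w≥1}`, is a fraction `X ⟶ Z ⟵ N`
whose denominator has its cone `D` in `P`. As `w` restricts to `P`, there is a triangle
`A ⟶ D ⟶ B` in `P` with `A` in `C_{w≤0}` and `B` in `C_{w≥1}`. The map `A ⟶ D` lifts to `Z`
because `Hom(A, N[1]) = 0`, and the cone `Z'` of the lift `A ⟶ Z` receives no nonzero map from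
`C_{w≤0}` (`exists_rightOrth_step`). Since `Z ⟶ Z'` has its cone in `P`, the numerator may be
replaced by `X ⟶ Z ⟶ Z'`, which vanishes.

The octahedral axiom is not assumed, so morphisms with cone in `P` need not compose. Fractions are
therefore taken with respect to the multiplicative closure of this class (`hasLeftCalculus`), and
the enlargement of denominators is iterated along a composite (`exists_rightOrth`).
-/

open CategoryTheory CategoryTheory.Limits CategoryTheory.Pretriangulated

namespace CWH

variable (C : Type*) [Category C] [HasZeroObject C] [HasShift C ℤ]
  [Preadditive C] [∀ n : ℤ, (shiftFunctor C n).Additive] [Pretriangulated C]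

variable {C}

/-! ### Roofs in the Verdier quotient -/

/-- The objects of `C` receiving no nonzero morphism from `C_{w≤0}`. This plays the role of
`C_{w≥1}`. -/
def rightOrth (w : WeightStructure C) : Set C :=
  {N : C | ∀ ⦃X : C⦄, X ∈ w.LE → ∀ f : X ⟶ N, f = 0}

lemma WeightStructure.shift_mem_rightOrth (w : WeightStructure C) {Y : C} (hY : Y ∈ w.GE) :
    Y⟦(1 : ℤ)⟧ ∈ rightOrth w :=
  fun _ hX f => w.orthogonal hX hY f

lemma WeightStructure.mem_rightOrth (w : WeightStructure C) {Y : C}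
    (hY : Y⟦(-1 : ℤ)⟧ ∈ w.GE) : Y ∈ rightOrth w := by
  intro X hX f
  have e : Y⟦(-1 : ℤ)⟧⟦(1 : ℤ)⟧ ≅ Y := shiftNegShift Y (1 : ℤ)
  rw [← cancel_mono e.inv, zero_comp]
  exact w.orthogonal hX hY _

lemma shift_rightOrth {w : WeightStructure C} {N : C} (hN : N ∈ rightOrth w) :
    N⟦(1 : ℤ)⟧ ∈ rightOrth w := by
  intro X hX f
  apply (shiftFunctor C (-1 : ℤ)).map_injective
  have e : N⟦(1 : ℤ)⟧⟦(-1 : ℤ)⟧ ≅ N := shiftShiftNeg N (1 : ℤ)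
  rw [← cancel_mono e.hom, Functor.map_zero, zero_comp]
  exact hN (w.shift_LE hX) _

/-- The Ore condition for `coneIn P`: a morphism with cone in `P` can be pushed out along any
morphism, without composing denominators. -/
lemma coneIn_ore (P : Set C) {X Y Z : C} (s : X ⟶ Y) (hs : coneIn P s) (f : X ⟶ Z) :
    ∃ (W : C) (t : Z ⟶ W) (g : Y ⟶ W), coneIn P t ∧ f ≫ t = s ≫ g := by
  obtain ⟨D, a, b, H, hD⟩ := hs
  obtain ⟨W, t, c, H'⟩ := distinguished_cocone_triangle₂ (b ≫ f⟦(1 : ℤ)⟧')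
  obtain ⟨g, hg, -⟩ := complete_distinguished_triangle_morphism₂ _ _ H H' f (𝟙 D)
    (Category.id_comp (b ≫ f⟦(1 : ℤ)⟧')).symm
  exact ⟨W, t, g, ⟨D, c, _, H', hD⟩, hg.symm⟩

lemma coneIn_cancel {P : Set C} (hP : IsTriangulatedSub P) {X Y Z : C} (s : X ⟶ Y)
    (hs : coneIn P s) (f : Y ⟶ Z) (hf : s ≫ f = 0) :
    ∃ (W : C) (t : Z ⟶ W), coneIn P t ∧ f ≫ t = 0 := by
  obtain ⟨D, a, b, H, hD⟩ := hs
  obtain ⟨q : D ⟶ Z, hq : f = a ≫ q⟩ := Triangle.yoneda_exact₂ _ H f hf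
  obtain ⟨W, t, c, H'⟩ := distinguished_cocone_triangle q
  refine ⟨W, t, ⟨_, _, _, rot_of_distTriang _ H', hP.shift _ hD 1⟩, ?_⟩
  have h0 : q ≫ t = 0 := comp_distTriang_mor_zero₁₂ _ H'
  rw [hq, Category.assoc, h0, comp_zero]

/-- Without the octahedral axiom, `coneIn P` need not be stable under composition; its
multiplicative closure nevertheless admits a left calculus of fractions. -/
lemma hasLeftCalculus {P : Set C} (hP : IsTriangulatedSub P) :
    (coneIn P).multiplicativeClosure.HasLeftCalculusOfFractions where
  exists_leftFraction := by
    rintro X Y ⟨s, hs, f⟩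
    suffices h : ∃ (W : C) (t : Y ⟶ W) (g : _ ⟶ W),
        (coneIn P).multiplicativeClosure t ∧ f ≫ t = s ≫ g by
      obtain ⟨W, t, g, ht, hc⟩ := h
      exact ⟨⟨g, t, ht⟩, hc⟩
    induction hs generalizing Y with
    | of s hs =>
      obtain ⟨W, t, g, ht, hc⟩ := coneIn_ore P s hs f
      exact ⟨W, t, g, .of _ ht, hc⟩
    | id X => exact ⟨Y, 𝟙 _, f, .id _, by simp⟩
    | comp_of s₁ s₂ _ hs₂ ih =>
      obtain ⟨W, t, g, ht, hc⟩ := ih f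
      obtain ⟨W', t', g', ht', hc'⟩ := coneIn_ore P s₂ hs₂ g
      exact ⟨W', t ≫ t', g', .comp_of _ _ ht ht', by
        rw [Category.assoc, ← hc', reassoc_of% hc]⟩
  ext := by
    intro X' X Y f₁ f₂ s hs hf
    suffices h : ∀ f : X ⟶ Y, s ≫ f = 0 → ∃ (W : C) (t : Y ⟶ W),
        (coneIn P).multiplicativeClosure t ∧ f ≫ t = 0 by
      obtain ⟨W, t, ht, h0⟩ := h (f₁ - f₂) (by rw [Preadditive.comp_sub, hf, sub_self])
      exact ⟨W, t, ht, by rwa [Preadditive.sub_comp, sub_eq_zero] at h0⟩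
    clear hf f₁ f₂
    intro f hf
    induction hs generalizing Y with
    | of s hs =>
      obtain ⟨W, t, ht, h0⟩ := coneIn_cancel hP s hs f hf
      exact ⟨W, t, .of _ ht, h0⟩
    | id X => exact ⟨Y, 𝟙 _, .id _, by simpa using hf⟩
    | comp_of s₁ s₂ _ hs₂ ih =>
      obtain ⟨W, t, ht, h0⟩ := ih (s₂ ≫ f) (by simpa using hf)
      obtain ⟨W', t', ht', h0'⟩ := coneIn_cancel hP s₂ hs₂ (f ≫ t) (by simpa using h0)
      exact ⟨W', t ≫ t', .comp_of _ _ ht ht', by simpa using h0'⟩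

lemma isLocalization_multiplicativeClosure {C E : Type*} [Category C] [Category E]
    (L : C ⥤ E) (W : MorphismProperty C) [L.IsLocalization W] :
    L.IsLocalization W.multiplicativeClosure := by
  have h : W.multiplicativeClosure.IsInvertedBy L := by
    intro X Y f hf
    induction hf with
    | of f hf => exact Localization.inverts L W f hf
    | id X => infer_instance
    | comp_of f g _ hg ih =>
      have := Localization.inverts L W g hg
      rw [L.map_comp]
      infer_instance
  have : (𝟭 E).IsLocalization (⊥ : MorphismProperty E) :=
    Functor.IsLocalization.for_id _ bot_le
  exact Functor.IsLocalization.comp L (𝟭 E) W ⊥ W.multiplicativeClosure h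
    W.le_multiplicativeClosure bot_le

/-! ### Orthogonality in the quotient -/

/-- A denominator out of an object orthogonal to `C_{w≤0}` can be enlarged so that its target is
again orthogonal to `C_{w≤0}`: if `N → Z → D` is a triangle with `D` in `P`, the
`w_{≤0}`-truncation `A` of `D` lifts to `Z`, and the cone of the lift is orthogonal. -/
lemma exists_rightOrth_step {w : WeightStructure C} {P : Set C} (hP : IsTriangulatedSub P)
    (hres : IsWeightStructureOn P (P ∩ w.LE) (P ∩ w.GE)) {N Z : C}
    (hN : N ∈ rightOrth w) (t : N ⟶ Z) (ht : coneIn P t) :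
    ∃ (Z' : C) (t' : Z ⟶ Z'), coneIn P t' ∧ Z' ∈ rightOrth w := by
  obtain ⟨D, p, q, H, hD⟩ := ht
  obtain ⟨A, B, i, r, d, HD, ⟨hAP, hA⟩, -, hB⟩ := hres.decomp D hD
  have hB' := w.mem_rightOrth hB
  obtain ⟨j : A ⟶ Z, hj : i = j ≫ p⟩ :=
    Triangle.coyoneda_exact₃ _ H i (shift_rightOrth hN hA _)
  obtain ⟨Z', t', e, H'⟩ := distinguished_cocone_triangle j
  refine ⟨Z', t', ⟨_, _, _, rot_of_distTriang _ H', hP.shift _ hAP 1⟩, ?_⟩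
  have hj1 : e ≫ j⟦(1 : ℤ)⟧' = 0 := comp_distTriang_mor_zero₃₁ _ H'
  intro X hX x
  -- `X → Z' → A[1]` vanishes since it dies in `D[1]` and `Hom(X, B) = 0`.
  have hxe : x ≫ e = 0 := by
    obtain ⟨y : X ⟶ B, hy : x ≫ e = y ≫ d⟩ := Triangle.coyoneda_exact₁ _ HD (x ≫ e) (by
      change (x ≫ e) ≫ i⟦(1 : ℤ)⟧' = 0
      rw [hj, Functor.map_comp, Category.assoc, reassoc_of% hj1, zero_comp, comp_zero])
    rw [hy, hB' hX y, zero_comp]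
  obtain ⟨z : X ⟶ Z, hz : x = z ≫ t'⟩ := Triangle.coyoneda_exact₃ _ H' x hxe
  -- `z : X → Z` factors through `A`: its image in `D` does, and the difference lifts to `N`.
  obtain ⟨a : X ⟶ A, ha : z ≫ p = a ≫ i⟩ :=
    Triangle.coyoneda_exact₂ _ HD (z ≫ p) (hB' hX _)
  obtain ⟨n : X ⟶ N, hn : z - a ≫ j = n ≫ t⟩ := Triangle.coyoneda_exact₂ _ H (z - a ≫ j) (by
    change (z - a ≫ j) ≫ p = 0
    rw [Preadditive.sub_comp, ha, Category.assoc, ← hj, sub_self])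
  rw [hN hX n, zero_comp, sub_eq_zero] at hn
  have hjt : j ≫ t' = 0 := comp_distTriang_mor_zero₁₂ _ H'
  rw [hz, hn, Category.assoc, hjt, comp_zero]

/-- Iteration of `exists_rightOrth_step` along a composite of morphisms with cones in `P`. -/
lemma exists_rightOrth {E : Type*} [Category E] {w : WeightStructure C} {P : Set C}
    (hP : IsTriangulatedSub P) (hres : IsWeightStructureOn P (P ∩ w.LE) (P ∩ w.GE))
    (L : C ⥤ E) [L.IsLocalization (coneIn P)] {N Z : C} (hN : N ∈ rightOrth w) (t : N ⟶ Z)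
    (ht : (coneIn P).multiplicativeClosure t) :
    ∃ (Z' : C) (t' : Z ⟶ Z'), IsIso (L.map t') ∧ Z' ∈ rightOrth w := by
  have hL := Localization.inverts L (coneIn P)
  induction ht with
  | of t ht =>
    obtain ⟨Z', t', ht', hZ'⟩ := exists_rightOrth_step hP hres hN t ht
    exact ⟨Z', t', hL _ ht', hZ'⟩
  | id X => exact ⟨X, 𝟙 X, inferInstance, hN⟩
  | comp_of t₁ t₂ _ ht₂ ih =>
    obtain ⟨Z₁, s, _, hZ₁⟩ := ih hN
    obtain ⟨V, k, h, hk, hc⟩ := coneIn_ore P t₂ ht₂ s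
    have := hL _ hk
    have := hL _ ht₂
    -- `h` is inverted by `L` because the other three sides of the Ore square are.
    have : IsIso (L.map t₂ ≫ L.map h) := by
      rw [← L.map_comp, ← hc, L.map_comp]
      infer_instance
    have : IsIso (L.map h) := IsIso.of_isIso_comp_left (L.map t₂) _
    obtain ⟨Z', t', ht', hZ'⟩ := exists_rightOrth_step hP hres hZ₁ k hk
    have := hL _ ht'
    exact ⟨Z', h ≫ t', by rw [L.map_comp]; infer_instance, hZ'⟩

lemma map_hom_eq_zero {E : Type*} [Category E] [HasZeroMorphisms E] {w : WeightStructure C}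
    {P : Set C} (hP : IsTriangulatedSub P)
    (hres : IsWeightStructureOn P (P ∩ w.LE) (P ∩ w.GE))
    (L : C ⥤ E) [L.PreservesZeroMorphisms] [L.IsLocalization (coneIn P)] {X N : C}
    (hX : X ∈ w.LE) (hN : N ∈ rightOrth w) (f : L.obj X ⟶ L.obj N) : f = 0 := by
  have := hasLeftCalculus hP
  have := isLocalization_multiplicativeClosure L (coneIn P)
  obtain ⟨φ, hφ⟩ := Localization.exists_leftFraction L (coneIn P).multiplicativeClosure f
  obtain ⟨Z', t', _, hZ'⟩ := exists_rightOrth hP hres L hN φ.s φ.hs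
  have h1 : f ≫ L.map φ.s = L.map φ.f := by
    rw [hφ, MorphismProperty.LeftFraction.map_comp_map_s]
  rw [← cancel_mono (L.map φ.s), zero_comp, h1, ← cancel_mono (L.map t'), zero_comp,
    ← L.map_comp, hZ' hX (φ.f ≫ t'), L.map_zero]

/-! ### Retract closures -/

lemma IsRetract.trans {E : Type*} [Category E] {X Y Z : E} (h : IsRetract X Y)
    (h' : IsRetract Y Z) : IsRetract X Z := by
  obtain ⟨i, r, hir⟩ := h
  obtain ⟨j, q, hjq⟩ := h'
  exact ⟨i ≫ j, q ≫ r, by rw [Category.assoc, reassoc_of% hjq, hir]⟩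

lemma IsRetract.of_iso {E : Type*} [Category E] {X Y : E} (e : X ≅ Y) : IsRetract X Y :=
  ⟨e.hom, e.inv, e.hom_inv_id⟩

lemma IsRetract.map {E F : Type*} [Category E] [Category F] (G : E ⥤ F) {X Y : E}
    (h : IsRetract X Y) : IsRetract (G.obj X) (G.obj Y) := by
  obtain ⟨i, r, hir⟩ := h
  exact ⟨G.map i, G.map r, by rw [← G.map_comp, hir, G.map_id]⟩

lemma retract_mem_retractClosure {E : Type*} [Category E] {S : Set E} {X Y : E}
    (h : IsRetract X Y) (hY : Y ∈ retractClosure S) : X ∈ retractClosure S := by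
  obtain ⟨Z, hZ, hYZ⟩ := hY
  exact ⟨Z, hZ, h.trans hYZ⟩

/-- If `X⟦n⟧` stays in `S` for `X ∈ S`, the retract closure of the image of `S` under a functor
commuting with shifts has the same stability. -/
lemma shift_mem_retractClosure {C E : Type*} [Category C] [Category E] [HasShift C ℤ]
    [HasShift E ℤ] (L : C ⥤ E) [L.CommShift ℤ] {S : Set C} (n : ℤ)
    (hS : ∀ ⦃X : C⦄, X ∈ S → X⟦n⟧ ∈ S) {X : E} (hX : X ∈ retractClosure (L.obj '' S)) :
    X⟦n⟧ ∈ retractClosure (L.obj '' S) := by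
  obtain ⟨_, ⟨Y, hY, rfl⟩, h⟩ := hX
  exact ⟨_, ⟨_, hS hY, rfl⟩,
    (h.map (shiftFunctor E n)).trans (.of_iso ((L.commShiftIso n).app Y).symm)⟩

/-- if `w` restricts to a full triangulated subcategory `D` (with class of
objects `P`), then `w` induces a weight structure on the Verdier quotient `C/D`
(realized as any localization `L : C ⥤ E` of `C` at the class of morphisms whose cone
lies in `P`), given by the Karoubi-closures of `L(C_{w≤0})` and of `L(C_{w≥0})`. -/
theorem statement9 {E : Type*} [Category E] [HasZeroObject E] [HasShift E ℤ]
    [Preadditive E] [∀ n : ℤ, (shiftFunctor E n).Additive] [Pretriangulated E]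
    (w : WeightStructure C) (P : Set C) (hP : IsTriangulatedSub P)
    (hres : IsWeightStructureOn P (P ∩ w.LE) (P ∩ w.GE))
    (L : C ⥤ E) [L.CommShift ℤ] [L.IsTriangulated] [L.IsLocalization (coneIn P)] :
    ∃ w' : WeightStructure E,
      w'.LE = retractClosure (L.obj '' w.LE) ∧
      w'.GE = retractClosure (L.obj '' w.GE) := by
  refine ⟨{
    LE := retractClosure (L.obj '' w.LE)
    GE := retractClosure (L.obj '' w.GE)
    retract_LE := fun _ _ h hY => retract_mem_retractClosure h hY
    retract_GE := fun _ _ h hY => retract_mem_retractClosure h hY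
    shift_LE := fun _ hX => shift_mem_retractClosure L _ w.shift_LE hX
    shift_GE := fun _ hX => shift_mem_retractClosure L _ w.shift_GE hX
    orthogonal := ?_
    decomp := ?_ }, rfl, rfl⟩
  · rintro X Y ⟨_, ⟨X₀, hX₀, rfl⟩, i, r, hir⟩ ⟨_, ⟨Y₀, hY₀, rfl⟩, hY⟩ f
    obtain ⟨j, q, hjq⟩ := (hY.map (shiftFunctor E (1 : ℤ))).trans
      (.of_iso ((L.commShiftIso (1 : ℤ)).app Y₀).symm)
    have h0 : r ≫ f ≫ j = 0 :=
      map_hom_eq_zero hP hres L hX₀ (w.shift_mem_rightOrth hY₀) _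
    calc f = i ≫ (r ≫ f ≫ j) ≫ q := by simp [hjq, reassoc_of% hir]
      _ = 0 := by rw [h0, zero_comp, comp_zero]
  · intro M
    have := Localization.essSurj L (coneIn P)
    let e := L.objObjPreimageIso M
    obtain ⟨X, Y, f, g, h, H, hX, hY⟩ := w.decomp (L.objPreimage M)
    have HL := L.map_distinguished _ H
    refine ⟨L.obj X, L.obj Y, L.map f ≫ e.hom, e.inv ≫ L.map g,
      L.map h ≫ (L.commShiftIso (1 : ℤ)).hom.app X, ?_,
      ⟨_, ⟨X, hX, rfl⟩, .of_iso (Iso.refl _)⟩,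
      ⟨_, ⟨_, hY, rfl⟩, .of_iso ((L.commShiftIso (-1 : ℤ)).app Y).symm⟩⟩
    exact isomorphic_distinguished _ HL _
      (Triangle.isoMk _ _ (Iso.refl _) e.symm (Iso.refl _)
        (show (L.map f ≫ e.hom) ≫ e.inv = 𝟙 _ ≫ L.map f by simp)
        (show (e.inv ≫ L.map g) ≫ 𝟙 _ = e.inv ≫ L.map g by simp)
        (show (L.map h ≫ (L.commShiftIso (1 : ℤ)).hom.app X) ≫ (𝟙 (L.obj X))⟦(1 : ℤ)⟧' =
          𝟙 _ ≫ L.map h ≫ (L.commShiftIso (1 : ℤ)).hom.app X by simp))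

end CWH
end
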